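/- arXiv:2010.14801 — 2 statements merged into one kernel-verified Lean document; each statement's English description precedes it below -/
import Mathlib

section
/- Let d ≥ 2 and r ≥ 1 be integers. There is a constant C(r,d) > 0 such that for every m ≥ 1, Θ_m(U(C^r[0,1]^d), L_∞[0,1]^d) ≤ C(r,d) m^{−r/(d−1)}; that is, every f ∈ U(C^r[0,1]^d) can be approximated in the sup norm within C(r,d) m^{−r/(d−1)} by a sum of m products u^{1,s}(x_1)⋯u^{d,s}(x_d). -/
/-- The closed unit cube `[0,1]^d`. -/
def unitCube (d : ℕ) : Set (Fin d → ℝ) := Set.univ.pi fun _ => Set.Icc 0 1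

/-- Partial derivative (within the unit cube) in direction `i`. -/
noncomputable def pdermW (d : ℕ) (i : Fin d) (f : (Fin d → ℝ) → ℝ) :
    (Fin d → ℝ) → ℝ :=
  fun x => fderivWithin ℝ f (unitCube d) x (Pi.single i 1)

/-- Iterated partial derivative (within the unit cube) along a list of coordinates. -/
noncomputable def iterPDW (d : ℕ) : List (Fin d) → ((Fin d → ℝ) → ℝ) → (Fin d → ℝ) → ℝ
  | [], f => f
  | i :: L, f => pdermW d i (iterPDW d L f)

/-- The unit ball `U(C^r[0,1]^d)`: functions with all partial derivatives of total order
at most `r` existing, continuous, and bounded by `1` on the cube. -/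
def UCr (d r : ℕ) : Set ((Fin d → ℝ) → ℝ) :=
  {f | ContDiffOn ℝ r f (unitCube d) ∧
    ∀ L : List (Fin d), L.length ≤ r → ∀ x ∈ unitCube d, |iterPDW d L f x| ≤ 1}

/-!
Sample `f` in one variable by piecewise Lagrange interpolation: cut `[0,1]` into `n` cells and use
`r` nodes in each. This linear operator has norm independent of `n`, and by Taylor's theorem it
approximates every univariate slice of `f` to order `n ^ (-r)`. Applying it to all variables but
the last replaces `f` by a sum of `(n r) ^ (d - 1)` terms, each of them a product of univariate
weights times a slice of `f` in the last variable alone. The error stays of order `n ^ (-r)`, and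
choosing `n` maximal with `(n r) ^ (d - 1) ≤ m` gives the rate.
-/

open Finset Polynomial

section SamplingOperator

/-- A linear operator `g ↦ ∑ j, weight j · g (node j)` on functions on `[0,1]`, built from finitely
many point evaluations, whose sup-norm operator norm is at most `K`. -/
structure SamplingOperator (J : Type*) [Fintype J] (K : ℝ) where
  node : J → ℝ
  weight : J → ℝ → ℝ
  node_mem : ∀ j, node j ∈ Set.Icc (0 : ℝ) 1
  sum_abs_weight_le : ∀ t ∈ Set.Icc (0 : ℝ) 1, ∑ j, |weight j t| ≤ K

namespace SamplingOperator

variable {J : Type*} [Fintype J] {K : ℝ}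

theorem norm_bound_nonneg (A : SamplingOperator J K) : 0 ≤ K :=
  (sum_nonneg fun _ _ => abs_nonneg _).trans (A.sum_abs_weight_le 0 (by simp))

variable (A : SamplingOperator J K)

/-- The value at `t` of the image of `g` under the sampling operator. -/
def apply (g : ℝ → ℝ) (t : ℝ) : ℝ := ∑ j, A.weight j t * g (A.node j)

/-- The operator fixes the polynomials of degree less than `r`. -/
def ReproducesDegreeLT (r : ℕ) : Prop :=
  ∀ P : ℝ[X], P.degree < r → ∀ t, A.apply (fun s => P.eval s) t = P.eval t

theorem abs_weight_le (j : J) {t : ℝ} (ht : t ∈ Set.Icc (0 : ℝ) 1) : |A.weight j t| ≤ K :=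
  (single_le_sum (f := fun j => |A.weight j t|) (fun _ _ => abs_nonneg _) (mem_univ j)).trans
    (A.sum_abs_weight_le t ht)

theorem abs_sum_weight_mul_le {c : J → ℝ} {δ t : ℝ} (hδ : 0 ≤ δ) (hc : ∀ j, |c j| ≤ δ)
    (ht : t ∈ Set.Icc (0 : ℝ) 1) : |∑ j, A.weight j t * c j| ≤ K * δ :=
  calc |∑ j, A.weight j t * c j| ≤ ∑ j, |A.weight j t * c j| := abs_sum_le_sum_abs _ _
    _ ≤ ∑ j, |A.weight j t| * δ := by
        gcongr with j
        rw [abs_mul]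
        gcongr
        exact hc j
    _ = (∑ j, |A.weight j t|) * δ := (sum_mul ..).symm
    _ ≤ K * δ := by gcongr; exact A.sum_abs_weight_le t ht

theorem abs_sub_apply_le_of_apply_eq {g h : ℝ → ℝ} {δ t : ℝ} (ht : t ∈ Set.Icc (0 : ℝ) 1)
    (hgh : ∀ s ∈ Set.Icc (0 : ℝ) 1, |g s - h s| ≤ δ) (hfix : A.apply h t = h t) :
    |g t - A.apply g t| ≤ (1 + K) * δ := by
  have hδ : 0 ≤ δ := (abs_nonneg _).trans (hgh t ht)
  have split : g t - A.apply g t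
      = (g t - h t) - ∑ j, A.weight j t * (g (A.node j) - h (A.node j)) := by
    simp only [mul_sub, sum_sub_distrib]
    rw [← apply, ← apply, hfix]
    ring
  rw [split, one_add_mul]
  exact (abs_sub _ _).trans <| add_le_add (hgh t ht) <|
    A.abs_sum_weight_mul_le hδ (fun j => hgh _ (A.node_mem j)) ht

end SamplingOperator

theorem exists_samplingOperator_reproducesDegreeLT (r : ℕ) :
    ∃ (K : ℝ) (A : SamplingOperator (Fin r) K), A.ReproducesDegreeLT r := by
  let z : Fin r → ℝ := fun j => j / r
  let ℓ : Fin r → ℝ[X] := Lagrange.basis univ z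
  obtain ⟨K, hK⟩ := (isCompact_Icc (a := (0 : ℝ)) (b := 1)).exists_bound_of_continuousOn
    (f := fun t => ∑ j, |(ℓ j).eval t|) (by fun_prop)
  have z_mem (j : Fin r) : z j ∈ Set.Icc (0 : ℝ) 1 :=
    ⟨by positivity, div_le_one_of_le₀ (by exact_mod_cast j.2.le) r.cast_nonneg⟩
  have z_injective : Function.Injective z := fun i j hij => by
    have hr : (r : ℝ) ≠ 0 := by exact_mod_cast i.pos.ne'
    exact Fin.ext (by exact_mod_cast (div_left_inj' hr).1 hij)
  refine ⟨K, ⟨z, fun j t => (ℓ j).eval t, z_mem, fun t ht => (le_abs_self _).trans (hK t ht)⟩,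
    fun P hP t => ?_⟩
  have hP' : P = Lagrange.interpolate univ z fun j => P.eval (z j) :=
    Lagrange.eq_interpolate z_injective.injOn (by simpa using hP)
  conv_rhs => rw [hP', Lagrange.interpolate_apply, eval_finsetSum]
  exact sum_congr rfl fun j _ => by rw [eval_mul, eval_C, mul_comm]

end SamplingOperator

section Refine

variable {n : ℕ} {t : ℝ}

/-- Index of the cell `[k/n, (k+1)/n]` of `[0,1]` assigned to `t`, the left one at an interior grid
point. Truncated subtraction sends `t = 0` to cell `0`. -/
noncomputable def cellIndex (n : ℕ) (t : ℝ) : ℕ := ⌈t * n⌉₊ - 1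

theorem cellIndex_lt (hn : n ≠ 0) (ht : t ≤ 1) : cellIndex n t < n := by
  have : ⌈t * n⌉₊ ≤ n := Nat.ceil_le.2 (mul_le_of_le_one_left n.cast_nonneg ht)
  unfold cellIndex
  omega

theorem mul_sub_cellIndex_mem (n : ℕ) (ht : 0 ≤ t) :
    t * n - cellIndex n t ∈ Set.Icc (0 : ℝ) 1 := by
  have htn : 0 ≤ t * n := by positivity
  have upper := Nat.le_ceil (t * n)
  have lower := Nat.ceil_lt_add_one htn
  unfold cellIndex
  rcases Nat.eq_zero_or_pos ⌈t * n⌉₊ with h | h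
  · simp only [h, Nat.cast_zero, Nat.zero_sub, sub_zero] at upper ⊢
    exact ⟨htn, upper.trans zero_le_one⟩
  · rw [Nat.cast_sub h, Nat.cast_one]
    constructor <;> linarith

variable {J : Type*} [Fintype J]

theorem sum_ite_eq_cellIndex (hn : n ≠ 0) (ht : t ≤ 1) (F : ℕ → J → ℝ) :
    ∑ p : Fin n × J, (if p.1 = cellIndex n t then F p.1 p.2 else 0)
      = ∑ j, F (cellIndex n t) j := by
  rw [Fintype.sum_prod_type, sum_eq_single ⟨cellIndex n t, cellIndex_lt hn ht⟩]
  · simp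
  · intro k _ hk
    have hk' : (k : ℕ) ≠ cellIndex n t := fun h => hk (Fin.ext h)
    simp [hk']
  · simp

namespace SamplingOperator

variable {K : ℝ} (A : SamplingOperator J K)

/-- The composite operator applying a rescaled copy of `A` on each of the `n` cells
`[k/n, (k+1)/n]`. -/
noncomputable def refine (hn : n ≠ 0) : SamplingOperator (Fin n × J) K where
  node p := (p.1 + A.node p.2) / n
  weight p t := if p.1 = cellIndex n t then A.weight p.2 (t * n - p.1) else 0
  node_mem p := by
    obtain ⟨h0, h1⟩ := A.node_mem p.2
    have hp : (p.1 : ℝ) + 1 ≤ n := by exact_mod_cast p.1.2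
    exact ⟨by positivity, div_le_one_of_le₀ (by linarith) n.cast_nonneg⟩
  sum_abs_weight_le t ht := by
    simp only [apply_ite abs, abs_zero]
    rw [sum_ite_eq_cellIndex hn ht.2 fun k j => |A.weight j (t * n - k)|]
    exact A.sum_abs_weight_le _ (mul_sub_cellIndex_mem n ht.1)

theorem refine_apply (hn : n ≠ 0) (ht : t ≤ 1) (g : ℝ → ℝ) :
    (A.refine hn).apply g t
      = A.apply (fun s => g ((cellIndex n t + s) / n)) (t * n - cellIndex n t) := by
  simp only [apply, refine, ite_mul, zero_mul]
  exact sum_ite_eq_cellIndex hn ht fun k j => A.weight j (t * n - k) * g ((k + A.node j) / n)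

end SamplingOperator

theorem exists_polynomial_abs_sub_eval_le {r : ℕ} {g : ℝ → ℝ} {a w M : ℝ} (hw : 0 ≤ w)
    (hg : ContDiffOn ℝ r g (Set.Icc a (a + w)))
    (hM : ∀ x ∈ Set.Icc a (a + w), |iteratedDerivWithin r g (Set.Icc a (a + w)) x| ≤ M) :
    ∃ P : ℝ[X], P.degree < r ∧
      ∀ s ∈ Set.Icc (0 : ℝ) 1, |g (a + w * s) - P.eval s| ≤ M * w ^ r := by
  have mem_Icc {s : ℝ} (hs : s ∈ Set.Icc (0 : ℝ) 1) : a + w * s ∈ Set.Icc a (a + w) :=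
    ⟨by nlinarith [hs.1], by nlinarith [hs.2]⟩
  obtain _ | q := r
  · exact ⟨0, by simp, fun s hs => by simpa using hM _ (mem_Icc hs)⟩
  let c (k : ℕ) : ℝ := (k.factorial : ℝ)⁻¹ * w ^ k * iteratedDerivWithin k g (Set.Icc a (a + w)) a
  refine ⟨∑ k : Fin (q + 1), C (c k) * X ^ (k : ℕ), degree_sum_fin_lt _, fun s hs => ?_⟩
  have eval_eq : (∑ k : Fin (q + 1), C (c k) * X ^ (k : ℕ)).eval s
      = taylorWithinEval g q (Set.Icc a (a + w)) a (a + w * s) := by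
    rw [taylor_within_apply, eval_finsetSum, ← Fin.sum_univ_eq_sum_range
      (fun k => ((k.factorial : ℝ)⁻¹ * (a + w * s - a) ^ k) •
        iteratedDerivWithin k g (Set.Icc a (a + w)) a)]
    refine sum_congr rfl fun k _ => ?_
    simp only [c, eval_mul, eval_C, eval_pow, eval_X, add_sub_cancel_left, mul_pow, smul_eq_mul]
    ring
  have hM0 : 0 ≤ M := (abs_nonneg _).trans (hM a ⟨le_rfl, by linarith⟩)
  rw [eval_eq]
  calc |g (a + w * s) - taylorWithinEval g q (Set.Icc a (a + w)) a (a + w * s)|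
      ≤ M * (a + w * s - a) ^ (q + 1) / q.factorial :=
        taylor_mean_remainder_bound (by linarith) (by exact_mod_cast hg) (mem_Icc hs) hM
    _ ≤ M * (a + w * s - a) ^ (q + 1) := by
        refine div_le_self ?_ (by exact_mod_cast q.factorial_pos)
        rw [add_sub_cancel_left]
        have := hs.1
        positivity
    _ ≤ M * w ^ (q + 1) := by
        rw [add_sub_cancel_left]
        gcongr
        · exact mul_nonneg hw hs.1
        · exact mul_le_of_le_one_right hw hs.2

theorem iteratedDerivWithin_eq_of_subset {𝕜 F : Type*} [NontriviallyNormedField 𝕜]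
    [NormedAddCommGroup F] [NormedSpace 𝕜 F] {k : ℕ} {g : 𝕜 → F} {s u : Set 𝕜} {x : 𝕜}
    (hsu : s ⊆ u) (hs : UniqueDiffOn 𝕜 s) (hu : UniqueDiffOn 𝕜 u) (hg : ContDiffOn 𝕜 k g u)
    (hx : x ∈ s) : iteratedDerivWithin k g s x = iteratedDerivWithin k g u x := by
  simp only [iteratedDerivWithin, iteratedFDerivWithin_subset hsu hs hu hg hx]

theorem SamplingOperator.ReproducesDegreeLT.abs_sub_refine_apply_le {r : ℕ} {K M : ℝ} {g : ℝ → ℝ}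
    {A : SamplingOperator J K} (hA : A.ReproducesDegreeLT r) (hn : n ≠ 0)
    (hg : ContDiffOn ℝ r g (Set.Icc 0 1))
    (hM : ∀ x ∈ Set.Icc (0 : ℝ) 1, |iteratedDerivWithin r g (Set.Icc 0 1) x| ≤ M)
    (ht : t ∈ Set.Icc (0 : ℝ) 1) :
    |g t - (A.refine hn).apply g t| ≤ (1 + K) * (M * (1 / n) ^ r) := by
  have hn0 : (0 : ℝ) < n := by exact_mod_cast Nat.pos_of_ne_zero hn
  set k := cellIndex n t
  have hcell : Set.Icc (k / n : ℝ) (k / n + 1 / n) ⊆ Set.Icc 0 1 := by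
    have : (k : ℝ) + 1 ≤ n := by exact_mod_cast cellIndex_lt hn ht.2
    refine Set.Icc_subset_Icc (by positivity) ?_
    rw [← add_div]
    exact div_le_one_of_le₀ this hn0.le
  have hwidth : (0 : ℝ) < 1 / n := by positivity
  obtain ⟨P, hPdeg, hP⟩ := exists_polynomial_abs_sub_eval_le (M := M) hwidth.le (hg.mono hcell)
    fun x hx => by
      rw [iteratedDerivWithin_eq_of_subset hcell (uniqueDiffOn_Icc (by linarith))
        (uniqueDiffOn_Icc zero_lt_one) hg hx]
      exact hM x (hcell hx)
  have rescale (s : ℝ) : (k / n + 1 / n * s : ℝ) = (k + s) / n := by ring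
  simp only [rescale] at hP
  have ht' : t = (k + (t * n - k)) / n := by field_simp; ring
  rw [A.refine_apply hn ht.2]
  conv_lhs => enter [1, 1]; rw [ht']
  exact A.abs_sub_apply_le_of_apply_eq (g := fun s => g ((k + s) / n))
    (mul_sub_cellIndex_mem n ht.1) hP (hA P hPdeg _)

end Refine

section UnitCube

variable {d r : ℕ} {f : (Fin d → ℝ) → ℝ} {x : Fin d → ℝ} {i : Fin d}

theorem uniqueDiffOn_unitCube (d : ℕ) : UniqueDiffOn ℝ (unitCube d) :=
  UniqueDiffOn.univ_pi fun _ => uniqueDiffOn_Icc zero_lt_one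

theorem update_mem_unitCube (hx : x ∈ unitCube d) (i : Fin d) {t : ℝ}
    (ht : t ∈ Set.Icc (0 : ℝ) 1) : Function.update x i t ∈ unitCube d :=
  Set.update_mem_pi_iff_of_mem hx |>.2 fun _ => ht

theorem cons_mem_unitCube {y : Fin d → ℝ} {t : ℝ} (ht : t ∈ Set.Icc (0 : ℝ) 1)
    (hy : y ∈ unitCube d) : (Fin.cons t y : Fin (d + 1) → ℝ) ∈ unitCube (d + 1) :=
  fun i _ => Fin.cases ht (fun j => hy j trivial) i

theorem contDiffOn_iterPDW (L : List (Fin d)) {m : ℕ}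
    (hf : ContDiffOn ℝ (m + L.length : ℕ) f (unitCube d)) :
    ContDiffOn ℝ m (iterPDW d L f) (unitCube d) := by
  induction L generalizing m with
  | nil => exact hf
  | cons i L ih =>
    have hL : ContDiffOn ℝ (m + 1 : ℕ) (iterPDW d L f) (unitCube d) :=
      ih (by rwa [add_assoc, add_comm 1])
    exact (hL.fderivWithin (uniqueDiffOn_unitCube d) (by norm_cast)).clm_apply contDiffOn_const

theorem iteratedDerivWithin_update_eq_iterPDW {k : ℕ} (hf : ContDiffOn ℝ k f (unitCube d))
    (hx : x ∈ unitCube d) {t : ℝ} (ht : t ∈ Set.Icc (0 : ℝ) 1) :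
    iteratedDerivWithin k (fun s => f (Function.update x i s)) (Set.Icc 0 1) t
      = iterPDW d (List.replicate k i) f (Function.update x i t) := by
  induction k generalizing t with
  | zero => simp [iterPDW]
  | succ k ih =>
    have ih' := fun {s} => ih (t := s) (hf.of_le (by norm_cast; omega))
    rw [iteratedDerivWithin_succ, derivWithin_congr (fun s hs => ih' hs) (ih' ht)]
    have hdiff : DifferentiableOn ℝ (iterPDW d (List.replicate k i) f) (unitCube d) :=
      (contDiffOn_iterPDW (m := 1) _ (by simpa [add_comm] using hf)).differentiableOn (by simp)
    exact ((hdiff _ (update_mem_unitCube hx i ht)).hasFDerivWithinAt.comp_hasDerivWithinAt t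
      (hasDerivAt_update x i t).hasDerivWithinAt
      fun s hs => update_mem_unitCube hx i hs).derivWithin (uniqueDiffOn_Icc zero_lt_one t ht)

theorem abs_le_one_of_mem_UCr (hf : f ∈ UCr d r) (hx : x ∈ unitCube d) : |f x| ≤ 1 :=
  hf.2 [] (by simp) x hx

theorem contDiffOn_update_of_mem_UCr (hf : f ∈ UCr d r) (hx : x ∈ unitCube d) :
    ContDiffOn ℝ r (fun s => f (Function.update x i s)) (Set.Icc 0 1) :=
  hf.1.comp (contDiff_update r x i).contDiffOn fun _ hs => update_mem_unitCube hx i hs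

theorem abs_iteratedDerivWithin_update_le_one_of_mem_UCr (hf : f ∈ UCr d r)
    (hx : x ∈ unitCube d) {t : ℝ} (ht : t ∈ Set.Icc (0 : ℝ) 1) :
    |iteratedDerivWithin r (fun s => f (Function.update x i s)) (Set.Icc 0 1) t| ≤ 1 := by
  rw [iteratedDerivWithin_update_eq_iterPDW hf.1 hx ht]
  exact hf.2 _ (by simp) _ (update_mem_unitCube hx i ht)

end UnitCube

section SeparatedApprox

variable {d N : ℕ} {ε δ : ℝ}

/-- `f` is within `ε`, uniformly on the cube, of a sum of `N` products of univariate functions.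
The factors need only be bounded on `[0,1]`, since values outside it are irrelevant. -/
def HasSeparatedApprox (N : ℕ) (ε : ℝ) (f : (Fin d → ℝ) → ℝ) : Prop :=
  ∃ u : Fin N → Fin d → ℝ → ℝ,
    (∀ s i, ∃ M : ℝ, ∀ t ∈ Set.Icc (0 : ℝ) 1, |u s i t| ≤ M) ∧
    ∀ x ∈ unitCube d, |f x - ∑ s, ∏ i, u s i (x i)| ≤ ε

namespace HasSeparatedApprox

theorem of_card_le {κ : Type*} [Fintype κ] {f : (Fin (d + 1) → ℝ) → ℝ}
    (hκ : Fintype.card κ ≤ N) (w : κ → Fin (d + 1) → ℝ → ℝ)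
    (hw : ∀ k i, ∃ M : ℝ, ∀ t ∈ Set.Icc (0 : ℝ) 1, |w k i t| ≤ M)
    (hf : ∀ x ∈ unitCube (d + 1), |f x - ∑ k, ∏ i, w k i (x i)| ≤ ε) :
    HasSeparatedApprox N ε f := by
  obtain ⟨e⟩ : Nonempty (κ ↪ Fin N) := Function.Embedding.nonempty_of_card_le (by simpa using hκ)
  let u : Fin N → Fin (d + 1) → ℝ → ℝ := Function.extend e w 0
  have u_apply (k : κ) : u (e k) = w k := e.injective.extend_apply _ _ _
  have u_eq_zero (s : Fin N) (hs : s ∉ Set.range e) : u s = 0 := Function.extend_apply' _ _ _ hs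
  have sum_eq (x : Fin (d + 1) → ℝ) : ∑ s, ∏ i, u s i (x i) = ∑ k, ∏ i, w k i (x i) := by
    refine (Fintype.sum_of_injective e e.injective _ _ (fun s hs => ?_) fun k => ?_).symm
    · simp [u_eq_zero s hs]
    · rw [u_apply]
  refine ⟨u, fun s i => ?_, fun x hx => by rw [sum_eq]; exact hf x hx⟩
  by_cases hs : s ∈ Set.range e
  · obtain ⟨k, rfl⟩ := hs
    rw [u_apply]
    exact hw k i
  · exact ⟨0, by simp [u_eq_zero s hs]⟩

theorem mono {f : (Fin (d + 1) → ℝ) → ℝ} (hf : HasSeparatedApprox N ε f) {N' : ℕ} (hN : N ≤ N')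
    (hεδ : ε ≤ δ) : HasSeparatedApprox N' δ f :=
  let ⟨u, hu, hfu⟩ := hf
  of_card_le (by simpa using hN) u hu fun x hx => (hfu x hx).trans hεδ

theorem of_abs_sub_le {f g : (Fin d → ℝ) → ℝ} (hg : HasSeparatedApprox N δ g)
    (hfg : ∀ x ∈ unitCube d, |f x - g x| ≤ ε) : HasSeparatedApprox N (ε + δ) f :=
  let ⟨u, hu, hgu⟩ := hg
  ⟨u, hu, fun x hx => (abs_sub_le _ _ _).trans (add_le_add (hfg x hx) (hgu x hx))⟩

theorem of_abs_le_of_fin_one {f : (Fin 1 → ℝ) → ℝ} {M : ℝ} (hf : ∀ x ∈ unitCube 1, |f x| ≤ M) :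
    HasSeparatedApprox 1 0 f := by
  refine ⟨fun _ _ t => f fun _ => t, fun _ _ => ⟨M, fun t ht => hf _ fun _ _ => ht⟩, fun x _ => ?_⟩
  have hx : (fun _ => x 0) = x := funext fun i => congrArg x (Subsingleton.elim 0 i)
  simp [hx]

theorem sum_weight_mul_tail {J : Type*} [Fintype J] {K : ℝ} (A : SamplingOperator J K)
    (hε : 0 ≤ ε) {F : J → (Fin d → ℝ) → ℝ} (hF : ∀ j, HasSeparatedApprox N ε (F j)) :
    HasSeparatedApprox (Fintype.card J * N) (K * ε)
      fun x : Fin (d + 1) → ℝ => ∑ j, A.weight j (x 0) * F j (Fin.tail x) := by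
  choose u hu hFu using hF
  refine of_card_le (κ := J × Fin N) (by simp)
    (fun p => Fin.cons (A.weight p.1) (u p.1 p.2)) (fun p i => ?_) fun x hx => ?_
  · cases i using Fin.cases with
    | zero => exact ⟨K, fun t ht => A.abs_weight_le p.1 ht⟩
    | succ i => exact hu p.1 p.2 i
  · have hsplit : ∑ j, A.weight j (x 0) * F j (Fin.tail x)
        - ∑ p : J × Fin N, ∏ i, (Fin.cons (A.weight p.1) (u p.1 p.2) : Fin (d + 1) → ℝ → ℝ) i (x i)
        = ∑ j, A.weight j (x 0) * (F j (Fin.tail x) - ∑ s, ∏ i, u j s i (Fin.tail x i)) := by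
      simp only [Fintype.sum_prod_type, Fin.prod_univ_succ, Fin.cons_zero, Fin.cons_succ, mul_sub,
        sum_sub_distrib, mul_sum, Fin.tail]
    rw [hsplit]
    exact A.abs_sum_weight_mul_le hε (fun j => hFu j _ fun i _ => hx i.succ trivial)
      (hx 0 trivial)

/- Cutting the factors off outside `[0,1]` makes them globally bounded. -/
theorem sInf_le {f : (Fin d → ℝ) → ℝ} (hf : HasSeparatedApprox N ε f) :
    sInf {ρ : ℝ | ∃ u : Fin N → Fin d → ℝ → ℝ,
      (∀ s i, ∃ M : ℝ, ∀ t : ℝ, |u s i t| ≤ M) ∧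
      ρ = ⨆ x : unitCube d, |f x.1 - ∑ s, ∏ i, u s i (x.1 i)|} ≤ ε := by
  obtain ⟨u, hu, hfu⟩ := hf
  have hε : 0 ≤ ε := (abs_nonneg _).trans (hfu 0 fun _ _ => by simp)
  refine le_trans (csInf_le ⟨0, ?_⟩
    ⟨fun s i => (Set.Icc 0 1).indicator (u s i), fun s i => ?_, rfl⟩)
    (Real.iSup_le (fun x => ?_) hε)
  · rintro _ ⟨v, -, rfl⟩
    exact Real.iSup_nonneg fun _ => abs_nonneg _
  · obtain ⟨M, hM⟩ := hu s i
    have hM0 : 0 ≤ M := (abs_nonneg _).trans (hM 0 (by simp))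
    refine ⟨M, fun t => ?_⟩
    by_cases ht : t ∈ Set.Icc (0 : ℝ) 1
    · simpa [ht] using hM t ht
    · simpa [ht] using hM0
  · simpa only [Set.indicator_of_mem (x.2 _ trivial)] using hfu x x.2

end HasSeparatedApprox

theorem SamplingOperator.hasSeparatedApprox {J : Type*} [Fintype J] {K M : ℝ}
    (A : SamplingOperator J K) {f : (Fin (d + 1) → ℝ) → ℝ}
    (hf : ∀ x ∈ unitCube (d + 1), |f x| ≤ M)
    (hA : ∀ i, ∀ x ∈ unitCube (d + 1),
      |f x - A.apply (fun t => f (Function.update x i t)) (x i)| ≤ ε) :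
    HasSeparatedApprox (Fintype.card J ^ d) ((∑ k ∈ range d, K ^ k) * ε) f := by
  have hK := A.norm_bound_nonneg
  have hε : 0 ≤ ε := (abs_nonneg _).trans (hA 0 0 fun _ _ => by simp)
  induction d with
  | zero => simpa using HasSeparatedApprox.of_abs_le_of_fin_one hf
  | succ d ih =>
    have slice (j : J) : HasSeparatedApprox (Fintype.card J ^ d) ((∑ k ∈ range d, K ^ k) * ε)
        fun y : Fin (d + 1) → ℝ => f (Fin.cons (A.node j) y) := by
      refine ih (fun y hy => hf _ (cons_mem_unitCube (A.node_mem j) hy)) fun i y hy => ?_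
      simpa only [Fin.cons_succ, Fin.cons_update] using
        hA i.succ _ (cons_mem_unitCube (A.node_mem j) hy)
    have first_variable (x) (hx : x ∈ unitCube (d + 2)) :
        |f x - ∑ j, A.weight j (x 0) * f (Fin.cons (A.node j) (Fin.tail x))| ≤ ε := by
      have hupdate (t : ℝ) : Function.update x 0 t = Fin.cons t (Fin.tail x) := by
        rw [← Fin.update_cons_zero (x 0), Fin.cons_self_tail]
      simpa only [SamplingOperator.apply, hupdate] using hA 0 x hx
    convert (HasSeparatedApprox.sum_weight_mul_tail A (by positivity) slice).of_abs_sub_le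
      first_variable using 1
    · rw [pow_succ']
    · rw [geom_sum_succ]
      ring

theorem exists_hasSeparatedApprox_of_mem_UCr (d r : ℕ) : ∃ C : ℝ, 0 ≤ C ∧ ∀ n : ℕ, n ≠ 0 →
    ∀ f ∈ UCr (d + 1) r, HasSeparatedApprox ((n * r) ^ d) (C * (1 / n) ^ r) f := by
  obtain ⟨K, A, hA⟩ := exists_samplingOperator_reproducesDegreeLT r
  have hK := A.norm_bound_nonneg
  refine ⟨(∑ k ∈ range d, K ^ k) * (1 + K), by positivity, fun n hn f hf => ?_⟩
  have slice_error (i) (x) (hx : x ∈ unitCube (d + 1)) :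
      |f x - (A.refine hn).apply (fun t => f (Function.update x i t)) (x i)|
        ≤ (1 + K) * (1 * (1 / n) ^ r) := by
    simpa only [Function.update_eq_self] using
      hA.abs_sub_refine_apply_le hn (contDiffOn_update_of_mem_UCr (i := i) hf hx)
        (fun t ht => abs_iteratedDerivWithin_update_le_one_of_mem_UCr hf hx ht) (hx i trivial)
  simpa [mul_assoc] using (A.refine hn).hasSeparatedApprox
    (fun x hx => abs_le_one_of_mem_UCr hf hx) slice_error

/- The shift from `n` to `n + 1` covers `n = 0`, where `f` is approximated by the empty sum. -/
theorem exists_hasSeparatedApprox_succ_of_mem_UCr (d r : ℕ) :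
    ∃ C : ℝ, 0 < C ∧ ∀ n : ℕ, ∀ f ∈ UCr (d + 1) r,
      HasSeparatedApprox ((n * r) ^ d) (C * (1 / (n + 1)) ^ r) f := by
  obtain ⟨C, hC, h⟩ := exists_hasSeparatedApprox_of_mem_UCr d r
  refine ⟨1 + C * 2 ^ r, by positivity, fun n f hf => ?_⟩
  rcases eq_or_ne n 0 with rfl | hn
  · refine .of_card_le (κ := Empty) (by simp) (fun k => k.elim) (fun k => k.elim) fun x hx => ?_
    have : 0 ≤ C * 2 ^ r := by positivity
    simpa using (abs_le_one_of_mem_UCr hf hx).trans (le_add_of_nonneg_right this)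
  · refine (h n hn f hf).mono le_rfl ?_
    have hn1 : (1 : ℝ) ≤ n := by exact_mod_cast Nat.one_le_iff_ne_zero.2 hn
    have hdouble : (1 / n : ℝ) ≤ 2 * (1 / (n + 1)) := by
      rw [mul_one_div, div_le_div_iff₀ (by linarith) (by linarith)]
      linarith
    calc C * (1 / n : ℝ) ^ r ≤ C * (2 * (1 / (n + 1))) ^ r := by gcongr
      _ = C * 2 ^ r * (1 / (n + 1)) ^ r := by rw [mul_pow, mul_assoc]
      _ ≤ (1 + C * 2 ^ r) * (1 / (n + 1)) ^ r := by gcongr; linarith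

end SeparatedApprox

theorem exists_mul_pow_le_and_le_succ_mul_pow {d r : ℕ} (hd : d ≠ 0) (hr : 0 < r) (m : ℕ) :
    ∃ n : ℕ, (n * r) ^ d ≤ m ∧ m ≤ ((n + 1) * r) ^ d := by
  refine ⟨Nat.nthRoot d m / r, ?_, ?_⟩
  · rw [← Nat.le_nthRoot_iff hd]
    exact Nat.div_mul_le_self _ _
  · exact ((Nat.nthRoot_lt_iff hd).1 (Nat.lt_mul_of_div_lt (Nat.lt_succ_self _) hr)).le

theorem one_div_pow_le_pow_mul_rpow_neg_div {d r n m : ℕ} (hd : d ≠ 0) (hm : 0 < m)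
    (h : m ≤ ((n + 1) * r) ^ d) :
    (1 / (n + 1) : ℝ) ^ r ≤ r ^ r * (m : ℝ) ^ (-(r : ℝ) / d) := by
  have hr : r ≠ 0 := by
    rintro rfl
    simp only [mul_zero, zero_pow hd] at h
    omega
  have hr0 : (0 : ℝ) < r := by exact_mod_cast Nat.pos_of_ne_zero hr
  have hb : (0 : ℝ) < (n + 1) * r := by positivity
  have hrpow : (((n + 1 : ℝ) * r) ^ d) ^ (-(r : ℝ) / d) = (((n + 1 : ℝ) * r) ^ r)⁻¹ := by
    rw [← Real.rpow_natCast_mul hb.le, mul_div_cancel₀ _ (by exact_mod_cast hd),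
      Real.rpow_neg hb.le, Real.rpow_natCast]
  calc (1 / (n + 1) : ℝ) ^ r = r ^ r * (((n + 1 : ℝ) * r) ^ d) ^ (-(r : ℝ) / d) := by
        rw [hrpow, mul_pow, mul_inv_rev, mul_inv_cancel_left₀ (by positivity), one_div, inv_pow]
    _ ≤ r ^ r * (m : ℝ) ^ (-(r : ℝ) / d) := by
        refine mul_le_mul_of_nonneg_left ?_ (by positivity)
        exact Real.rpow_le_rpow_of_nonpos (by exact_mod_cast hm) (by exact_mod_cast h)
          (div_nonpos_of_nonpos_of_nonneg (by linarith) d.cast_nonneg)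

/-- Upper bound: every `f ∈ U(C^r[0,1]^d)` can be approximated in the sup norm on the
cube within `C(r,d) m^{-r/(d-1)}` by a sum of `m` products of bounded univariate
functions. -/
theorem theta_UCr_upper_sup (d r : ℕ) (hd : 2 ≤ d) (hr : 1 ≤ r) :
    ∃ C : ℝ, 0 < C ∧ ∀ m : ℕ, 1 ≤ m → ∀ f ∈ UCr d r,
      sInf {ρ : ℝ | ∃ u : Fin m → Fin d → ℝ → ℝ,
          (∀ s i, ∃ M : ℝ, ∀ t : ℝ, |u s i t| ≤ M) ∧
          ρ = ⨆ x : unitCube d, |f x.1 - ∑ s, ∏ i, u s i (x.1 i)|} ≤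
        C * (m : ℝ) ^ (-(r : ℝ) / ((d : ℝ) - 1)) := by
  obtain ⟨e, rfl⟩ : ∃ e, d = e + 1 := ⟨d - 1, by omega⟩
  have he : e ≠ 0 := by omega
  obtain ⟨C, hC, happrox⟩ := exists_hasSeparatedApprox_succ_of_mem_UCr e r
  refine ⟨C * r ^ r, by positivity, fun m hm f hf => ?_⟩
  obtain ⟨n, hnm, hmn⟩ := exists_mul_pow_le_and_le_succ_mul_pow he hr m
  have hrate : C * (1 / (n + 1) : ℝ) ^ r ≤ C * r ^ r * (m : ℝ) ^ (-(r : ℝ) / e) := by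
    rw [mul_assoc]
    gcongr
    exact one_div_pow_le_pow_mul_rpow_neg_div he hm hmn
  rw [Nat.cast_add_one, add_sub_cancel_right]
  exact ((happrox n f hf).mono hnm hrate).sInf_le
end

section
/- Let d ∈ ℕ and define the real polynomial Q(t) = ∑_{j=0}^d (−2)^j binom(t, j), where binom(t, j) = t(t−1)⋯(t−j+1)/j!. Then: (a) Q(j) = (−1)^j for every integer j with 0 ≤ j ≤ d; (b) for all integers l ≥ 0 and s with 1 ≤ s ≤ l+1 one has |Q(−s)| ≤ 2^{d+1} binom(l+d, d). -/
/-- The polynomial binomial coefficient `binom(t, j) = t(t-1)⋯(t-j+1)/j!` for real `t`. -/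
noncomputable def realBinom (t : ℝ) (j : ℕ) : ℝ :=
  (∏ i ∈ Finset.range j, (t - i)) / (Nat.factorial j)

/-- The interpolation polynomial `Q(t) = ∑_{j=0}^d (-2)^j binom(t,j)`. -/
noncomputable def Qpoly (d : ℕ) (t : ℝ) : ℝ :=
  ∑ j ∈ Finset.range (d + 1), (-2 : ℝ) ^ j * realBinom t j

/-!
At an integer `0 ≤ n ≤ d` the sum defining `Q` is the complete binomial expansion of `(-2 + 1) ^ n`.
For the bound, `|t - i| ≤ |t| + i` turns the falling factorial in `binom(t, j)` into a rising one,
so `|t| ≤ x + 1` gives `|binom(t, j)| ≤ binom(x + j, j)`. For `x ≥ 0` the right-hand side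
increases with `j`, hence is at most `binom(x + d, d)`, and the weights `2 ^ j` sum to
`2 ^ (d + 1) - 1`.
-/

open Finset

theorem realBinom_natCast (n j : ℕ) : realBinom n j = n.choose j := by
  rw [realBinom, Nat.cast_choose_eq_descPochhammer_div, descPochhammer_eval_eq_prod_range]

theorem realBinom_add_natCast_self (x : ℝ) (j : ℕ) :
    realBinom (x + j) j = (∏ i ∈ range j, (x + 1 + i)) / j.factorial := by
  rw [realBinom, ← prod_range_reflect]
  congr 1
  refine prod_congr rfl fun i hi ↦ ?_
  have hij : i + 1 ≤ j := mem_range.mp hi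
  rw [Nat.sub_sub, add_comm 1 i, Nat.cast_sub hij]
  push_cast
  ring

theorem realBinom_add_natCast_self_succ (x : ℝ) (j : ℕ) :
    realBinom (x + (j + 1 : ℕ)) (j + 1) = realBinom (x + j) j * ((x + 1 + j) / (j + 1)) := by
  rw [realBinom_add_natCast_self, realBinom_add_natCast_self, prod_range_succ, Nat.factorial_succ,
    mul_comm (j + 1), Nat.cast_mul, Nat.cast_succ, mul_div_mul_comm]

theorem realBinom_add_natCast_self_nonneg {x : ℝ} (hx : -1 ≤ x) (j : ℕ) :
    0 ≤ realBinom (x + j) j := by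
  have hx' : 0 ≤ x + 1 := by linarith
  rw [realBinom_add_natCast_self]
  positivity

theorem monotone_realBinom_add_natCast_self {x : ℝ} (hx : 0 ≤ x) :
    Monotone fun j : ℕ ↦ realBinom (x + j) j := by
  refine monotone_nat_of_le_succ fun j ↦ ?_
  have one_le_ratio : 1 ≤ (x + 1 + j) / (j + 1) := by
    rw [one_le_div₀ (by positivity)]
    linarith
  rw [realBinom_add_natCast_self_succ]
  exact le_mul_of_one_le_right (realBinom_add_natCast_self_nonneg (by linarith) j) one_le_ratio

theorem abs_realBinom_le {t x : ℝ} (ht : |t| ≤ x + 1) (j : ℕ) :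
    |realBinom t j| ≤ realBinom (x + j) j := by
  have abs_factor_le (i : ℕ) : |t - i| ≤ x + 1 + i := by
    calc |t - i| ≤ |t| + |(i : ℝ)| := abs_sub _ _
      _ ≤ x + 1 + i := by rw [Nat.abs_cast]; gcongr
  rw [realBinom_add_natCast_self, realBinom, abs_div, Nat.abs_cast, abs_prod]
  gcongr with i
  exact abs_factor_le i

theorem sum_range_pow_mul_choose {R : Type*} [Semiring R] (c : R) {n d : ℕ} (hnd : n ≤ d) :
    ∑ j ∈ range (d + 1), c ^ j * n.choose j = (c + 1) ^ n := by
  have choose_vanishes : ∀ j ∈ range (d + 1), j ∉ range (n + 1) → c ^ j * n.choose j = 0 := by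
    intro j _ hj
    have hnj : n < j := by simpa using hj
    rw [Nat.choose_eq_zero_of_lt hnj, Nat.cast_zero, mul_zero]
  rw [(Commute.one_right c).add_pow,
    ← sum_subset (range_mono (Nat.succ_le_succ hnd)) choose_vanishes]
  simp only [one_pow, mul_one]

theorem Qpoly_natCast {n d : ℕ} (hnd : n ≤ d) : Qpoly d n = (-1) ^ n := by
  simp only [Qpoly, realBinom_natCast]
  rw [sum_range_pow_mul_choose _ hnd]
  norm_num

theorem abs_Qpoly_le {t x : ℝ} (hx : 0 ≤ x) (ht : |t| ≤ x + 1) (d : ℕ) :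
    |Qpoly d t| ≤ (2 ^ (d + 1) - 1) * realBinom (x + d) d := by
  have abs_binom_le : ∀ j ∈ range (d + 1), |realBinom t j| ≤ realBinom (x + d) d := fun j hj ↦
    (abs_realBinom_le ht j).trans
      (monotone_realBinom_add_natCast_self hx (mem_range_succ_iff.mp hj))
  calc |Qpoly d t| ≤ ∑ j ∈ range (d + 1), |(-2) ^ j * realBinom t j| := abs_sum_le_sum_abs _ _
    _ = ∑ j ∈ range (d + 1), 2 ^ j * |realBinom t j| := by
      simp only [abs_mul, abs_pow, abs_neg, Nat.abs_ofNat]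
    _ ≤ ∑ j ∈ range (d + 1), 2 ^ j * realBinom (x + d) d := by
      gcongr with j hj
      exact abs_binom_le j hj
    _ = (2 ^ (d + 1) - 1) * realBinom (x + d) d := by
      rw [← sum_mul, ← mul_geom_sum]
      norm_num

theorem Qpoly_values_and_bound_general (d : ℕ) :
    (∀ j : ℕ, j ≤ d → Qpoly d j = (-1 : ℝ) ^ j) ∧
    (∀ x t : ℝ, 0 ≤ x → |t| ≤ x + 1 →
      |Qpoly d t| ≤ (2 ^ (d + 1) - 1) * realBinom (x + d) d) :=
  ⟨fun _ ↦ Qpoly_natCast, fun _ _ hx ht ↦ abs_Qpoly_le hx ht d⟩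

/-- (a) `Q(j) = (-1)^j` for integers `0 ≤ j ≤ d`; (b) `|Q(-s)| ≤ 2^{d+1} binom(l+d, d)`
for all integers `l ≥ 0` and `1 ≤ s ≤ l+1`. -/
theorem Qpoly_values_and_bound (d : ℕ) :
    (∀ j : ℕ, j ≤ d → Qpoly d j = (-1 : ℝ) ^ j) ∧
    (∀ l s : ℕ, 1 ≤ s → s ≤ l + 1 →
      |Qpoly d (-(s : ℝ))| ≤ 2 ^ (d + 1) * ((l + d).choose d : ℝ)) := by
  obtain ⟨values, bound⟩ := Qpoly_values_and_bound_general d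
  refine ⟨values, fun l s _ hsl ↦ (bound l _ l.cast_nonneg ?_).trans ?_⟩
  · rw [abs_neg, Nat.abs_cast]
    exact_mod_cast hsl
  · rw [← Nat.cast_add, realBinom_natCast]
    gcongr
    exact sub_le_self _ zero_le_one
end
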